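/- Let n be a finite type and let Λ, Γ, Φ : Matrix n n ℂ →ₗ[ℂ] Matrix n n ℂ satisfy Λ = (1+s) • Γ - s • Φ with s ≥ 0 and Φ positive (Φ maps positive semidefinite matrices to positive semidefinite matrices). Fix a nonempty finite index type J, reals p_j ≥ 0 (j ∈ J) with max_j p_j > 0, density matrices σ_j ∈ Matrix n n ℂ, and a POVM (N_y)_{y ∈ Y}, i.e., a finite family of positive semidefinite matrices with Σ_y N_y = 1. For a linear map Θ define S(Θ) := Σ_{y ∈ Y} max_{j ∈ J} (p_j · Re Tr(Θ(σ_j) · N_y)) and the min-information I_min(Θ) := Real.log (S(Θ)) - Real.log (max_{j ∈ J} p_j). If S(Λ) > 0 and S(Γ) > 0, then I_min(Λ) ≤ Real.log (1+s) + I_min(Γ). In particular, taking s equal to the robustness of non-Markovianity of Λ, the min-accessible information of Λ exceeds that of the Markovian map Γ by at most log(1 + N_R(Λ)). -/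

import Mathlib

open Matrix
open scoped ComplexOrder

/-- A density matrix: positive semidefinite with unit trace. -/
def IsDensityMatrix {n : Type*} [Fintype n] (ρ : Matrix n n ℂ) : Prop :=
  ρ.PosSemidef ∧ ρ.trace = 1

/-- A positive map: maps positive semidefinite matrices to positive semidefinite matrices. -/
def IsPositiveMap {n : Type*} [Fintype n]
    (Φ : Matrix n n ℂ →ₗ[ℂ] Matrix n n ℂ) : Prop :=
  ∀ X : Matrix n n ℂ, X.PosSemidef → (Φ X).PosSemidef

/-- The guessing probability `S(Θ) = Σ_y max_j p_j Re Tr[Θ(σ_j)N_y]` of a map `Θ` with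
respect to an encoding ensemble `(p_j, σ_j)` and a decoding POVM `(N_y)`. -/
noncomputable def guessingProb {n J Y : Type*} [Fintype n] [Fintype J] [Nonempty J]
    [Fintype Y] (Θ : Matrix n n ℂ →ₗ[ℂ] Matrix n n ℂ)
    (p : J → ℝ) (σ : J → Matrix n n ℂ) (N : Y → Matrix n n ℂ) : ℝ :=
  ∑ y, Finset.univ.sup' Finset.univ_nonempty
    (fun j => p j * ((Θ (σ j) * N y).trace).re)

/-- The min-information `I_min = log S(Θ) - log max_j p_j` of a map `Θ` with respect to an
encoding ensemble and a decoding POVM. -/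
noncomputable def minInfo {n J Y : Type*} [Fintype n] [Fintype J] [Nonempty J] [Fintype Y]
    (Θ : Matrix n n ℂ →ₗ[ℂ] Matrix n n ℂ)
    (p : J → ℝ) (σ : J → Matrix n n ℂ) (N : Y → Matrix n n ℂ) : ℝ :=
  Real.log (guessingProb Θ p σ N) - Real.log (Finset.univ.sup' Finset.univ_nonempty p)

theorem trace_mul_re_nonneg_aux {n : Type*} [Fintype n] [DecidableEq n]
    {A B : Matrix n n ℂ} (hA : A.PosSemidef) (hB : B.PosSemidef) :
    0 ≤ ((A * B).trace).re := by
  obtain ⟨C, rfl⟩ : ∃ C : Matrix n n ℂ, B = Cᴴ * C := by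
    open scoped MatrixOrder in
    exact CStarAlgebra.nonneg_iff_eq_star_mul_self.mp hB.nonneg
  rw [← Matrix.mul_assoc, Matrix.trace_mul_comm, ← Matrix.mul_assoc]
  exact (Complex.le_def.mp (hA.mul_mul_conjTranspose_same C).trace_nonneg).1

/-- Single-shot information-theoretic bound: for `Λ = (1+s)Γ - sΦ` with `Φ` positive, the
min-information of `Λ` exceeds that of `Γ` by at most `log(1+s)`; taking `s = N_R(Λ)` this
bounds the min-accessible information of a non-Markovian map in terms of its robustness. -/
theorem minInfo_bound {n : Type*} [Fintype n] [DecidableEq n]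
    (Λ Γ Φ : Matrix n n ℂ →ₗ[ℂ] Matrix n n ℂ) (s : ℝ) (hs : 0 ≤ s)
    (hΦ : IsPositiveMap Φ)
    (hdec : Λ = (((1 + s : ℝ) : ℂ)) • Γ - ((s : ℝ) : ℂ) • Φ)
    (J : Type*) [Fintype J] [Nonempty J]
    (p : J → ℝ) (hp : ∀ j, 0 ≤ p j)
    (hpmax : 0 < Finset.univ.sup' Finset.univ_nonempty p)
    (σ : J → Matrix n n ℂ) (hσ : ∀ j, IsDensityMatrix (σ j))
    (Y : Type*) [Fintype Y]
    (N : Y → Matrix n n ℂ) (hNpos : ∀ y, (N y).PosSemidef)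
    (hNsum : ∑ y, N y = 1)
    (hSΛ : 0 < guessingProb Λ p σ N) (hSΓ : 0 < guessingProb Γ p σ N) :
    minInfo Λ p σ N ≤ Real.log (1 + s) + minInfo Γ p σ N := by
  have hstep : guessingProb Λ p σ N ≤ (1 + s) * guessingProb Γ p σ N := by
    unfold guessingProb
    rw [Finset.mul_sum]
    refine Finset.sum_le_sum fun y _ => Finset.sup'_le _ _ fun j _ => ?_
    have h1 := Finset.le_sup' (fun j => p j * ((Γ (σ j) * N y).trace).re) (Finset.mem_univ j)
    have h2 : 0 ≤ ((Φ (σ j) * N y).trace).re :=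
      trace_mul_re_nonneg_aux (hΦ _ (hσ j).1) (hNpos y)
    have h3 : ((Λ (σ j) * N y).trace).re
        = (1 + s) * ((Γ (σ j) * N y).trace).re - s * ((Φ (σ j) * N y).trace).re := by
      rw [hdec, LinearMap.sub_apply, LinearMap.smul_apply, LinearMap.smul_apply, Matrix.sub_mul,
        Matrix.smul_mul, Matrix.smul_mul, Matrix.trace_sub, Matrix.trace_smul, Matrix.trace_smul,
        smul_eq_mul, smul_eq_mul, Complex.sub_re, Complex.re_ofReal_mul, Complex.re_ofReal_mul]
    have h4 := mul_le_mul_of_nonneg_left h1 (by linarith : 0 ≤ 1 + s)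
    have h5 := mul_nonneg (mul_nonneg (hp j) hs) h2
    refine le_trans ?_ h4
    rw [h3]
    nlinarith
  have hlog := Real.log_le_log hSΛ hstep
  rw [Real.log_mul (by linarith) hSΓ.ne'] at hlog
  unfold minInfo
  linarith
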